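/- Let L, N be a lightlike frame along the unit-speed spacelike curve γ̂ with first component L₀(0) of L(0) nonzero, and set δ_L(u) = ⟨L(u), L(0)/L₀(0)⟩. If α_L^{(l)}(0) = 0 for l = 0, …, k, then δ_L^{(l+1)}(0) = 0 for l = 0, …, k. -/

import Mathlib

open scoped Topology

noncomputable section

/-- Points/vectors of Lorentz–Minkowski 3-space `ℝ³₁`. -/
abbrev R3 : Type := Fin 3 → ℝ

/-- The Lorentz–Minkowski scalar product `⟨x,y⟩ = -x₀y₀ + x₁y₁ + x₂y₂`. -/
def mink (x y : R3) : ℝ := -(x 0 * y 0) + x 1 * y 1 + x 2 * y 2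

/-- `(L, N)` is a lightlike frame along the unit-speed spacelike curve `γ` on `I`:
`γ, L, N` are smooth on `I`, `⟨e,e⟩ = 1` (with `e = γ'`), `⟨e,L⟩ = ⟨e,N⟩ = 0`,
`⟨L,L⟩ = ⟨N,N⟩ = 0` and `⟨L,N⟩ = 1` on `I`. -/
structure LightlikeFrame (I : Set ℝ) (γ L N : ℝ → R3) : Prop where
  smooth_gamma : ContDiffOn ℝ (⊤ : ℕ∞) γ I
  smooth_L : ContDiffOn ℝ (⊤ : ℕ∞) L I
  smooth_N : ContDiffOn ℝ (⊤ : ℕ∞) N I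
  unit_speed : ∀ u ∈ I, mink (deriv γ u) (deriv γ u) = 1
  eL : ∀ u ∈ I, mink (deriv γ u) (L u) = 0
  eN : ∀ u ∈ I, mink (deriv γ u) (N u) = 0
  LL : ∀ u ∈ I, mink (L u) (L u) = 0
  NN : ∀ u ∈ I, mink (N u) (N u) = 0
  LN : ∀ u ∈ I, mink (L u) (N u) = 1

/-- `α_L = ⟨γ'', L⟩`. -/
def alphaL (γ L : ℝ → R3) (u : ℝ) : ℝ := mink (deriv (deriv γ) u) (L u)

/-- `α_N = ⟨γ'', N⟩`. -/
def alphaN (γ N : ℝ → R3) (u : ℝ) : ℝ := mink (deriv (deriv γ) u) (N u)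

/-- `α_G = ⟨L, N'⟩`. -/
def alphaG (L N : ℝ → R3) (u : ℝ) : ℝ := mink (L u) (deriv N u)

/-- `σ_L = α_L' + α_L α_G`. -/
def sigmaL (γ L N : ℝ → R3) (u : ℝ) : ℝ :=
  deriv (alphaL γ L) u + alphaL γ L u * alphaG L N u

/-- `σ_N = α_N' - α_N α_G`. -/
def sigmaN (γ L N : ℝ → R3) (u : ℝ) : ℝ :=
  deriv (alphaN γ N) u - alphaN γ N u * alphaG L N u

/-!
Differentiating the frame relations gives the Frenet equation `L' = -α_L e - α_G L`. Hence, for a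
fixed vector `v`, the function `δ = ⟨L, v⟩` solves the linear equation `δ' = -⟨e, v⟩ α_L - α_G δ`.
If moreover `δ` vanishes at the point, as it does for `v = L(0)/L₀(0)` because `L(0)` is lightlike,
then each order of vanishing of `α_L` forces one more order of vanishing of `δ`.
-/

open scoped ContDiff

section VanishingOrder

variable {𝕜 𝔸 : Type*} [NontriviallyNormedField 𝕜] [NormedRing 𝔸] [NormedAlgebra 𝕜 𝔸] {x : 𝕜}

lemma iteratedDeriv_mul_eq_zero_of_left {f g : 𝕜 → 𝔸} {n : ℕ} (hf : ContDiffAt 𝕜 n f x)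
    (hg : ContDiffAt 𝕜 n g x) (hfx : ∀ i ≤ n, iteratedDeriv i f x = 0) :
    iteratedDeriv n (f * g) x = 0 := by
  rw [iteratedDeriv_mul hf hg]
  refine Finset.sum_eq_zero fun i hi => ?_
  rw [hfx i (Finset.mem_range_succ_iff.mp hi), mul_zero, zero_mul]

lemma iteratedDeriv_eq_zero_of_deriv_eq_mul_add_mul {y α f c : 𝕜 → 𝔸} {k : ℕ}
    (hy : ContDiffAt 𝕜 k y x) (hα : ContDiffAt 𝕜 k α x) (hf : ContDiffAt 𝕜 k f x)
    (hc : ContDiffAt 𝕜 k c x) (hode : deriv y =ᶠ[𝓝 x] α * f + y * c) (hyx : y x = 0)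
    (hαx : ∀ l ≤ k, iteratedDeriv l α x = 0) :
    ∀ l ≤ k + 1, iteratedDeriv l y x = 0 := by
  intro l
  induction l using Nat.strong_induction_on with
  | _ l ih =>
    intro hl
    cases l with
    | zero => rwa [iteratedDeriv_zero]
    | succ m =>
      have hmk : (m : ℕ∞ω) ≤ k := by exact_mod_cast Nat.le_of_succ_le_succ hl
      have hαf : iteratedDeriv m (α * f) x = 0 :=
        iteratedDeriv_mul_eq_zero_of_left (hα.of_le hmk) (hf.of_le hmk)
          fun i hi => hαx i (by lia)
      have hyc : iteratedDeriv m (y * c) x = 0 :=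
        iteratedDeriv_mul_eq_zero_of_left (hy.of_le hmk) (hc.of_le hmk)
          fun i hi => ih i (by lia) (by lia)
      calc iteratedDeriv (m + 1) y x = iteratedDeriv m (α * f + y * c) x := by
            rw [iteratedDeriv_succ', hode.iteratedDeriv_eq m]
        _ = iteratedDeriv m (α * f) x + iteratedDeriv m (y * c) x :=
            iteratedDeriv_add ((hα.mul hf).of_le hmk) ((hy.mul hc).of_le hmk)
        _ = 0 := by rw [hαf, hyc, add_zero]

end VanishingOrder

lemma dualBases_of_card_eq_finrank {ι K V : Type*} [Fintype ι] [Nonempty ι] [Field K]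
    [AddCommGroup V] [Module K V] {v : ι → V} {f : ι → Module.Dual K V}
    (hcard : Fintype.card ι = Module.finrank K V) (hone : ∀ i, f i (v i) = 1)
    (hzero : Pairwise fun i j => f i (v j) = 0) : Module.DualBases v f where
  eval_same := hone
  eval_of_ne := hzero
  total {x y} hxy := by
    have hv : LinearIndependent K v := .of_pairwise_dual_eq_zero_one v f hzero hone
    obtain ⟨b, rfl⟩ : ∃ b : Module.Basis ι K V, ⇑b = v :=
      ⟨_, coe_basisOfLinearIndependentOfCardEqFinrank hv hcard⟩
    have hcoord (i : ι) : f i = b.coord i := b.ext fun j => by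
      rcases eq_or_ne i j with rfl | hij
      · simp [hone]
      · simp [hzero hij, hij.symm]
    exact b.ext_elem fun i => by simpa [hcoord] using hxy i

section Mink

lemma mink_comm (x y : R3) : mink x y = mink y x := by
  simp only [mink]; ring

lemma isBilinearMap_mink : IsBilinearMap ℝ mink where
  add_left x y z := by simp only [mink, Pi.add_apply]; ring
  smul_left c x y := by simp only [mink, Pi.smul_apply, smul_eq_mul]; ring
  add_right x y z := by simp only [mink, Pi.add_apply]; ring
  smul_right c x y := by simp only [mink, Pi.smul_apply, smul_eq_mul]; ring

lemma eq_lightlike_expansion {e l n : R3} (hee : mink e e = 1) (hel : mink e l = 0)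
    (hen : mink e n = 0) (hll : mink l l = 0) (hnn : mink n n = 0) (hln : mink l n = 1) (x : R3) :
    x = mink e x • e + mink n x • l + mink l x • n := by
  obtain ⟨B, hB⟩ : ∃ B : R3 →ₗ[ℝ] R3 →ₗ[ℝ] ℝ, ∀ x y, B x y = mink x y :=
    ⟨isBilinearMap_mink.toLinearMap, fun _ _ => rfl⟩
  have hdual : Module.DualBases ![e, l, n] ![B e, B n, B l] := by
    refine dualBases_of_card_eq_finrank (by simp) (fun i => ?_) fun i j hij => ?_
    · fin_cases i <;> simp [hB, hee, hln, mink_comm n l]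
    · fin_cases i <;> fin_cases j <;> simp_all [mink_comm n e, mink_comm l e]
  simpa [hB, Fin.sum_univ_three] using (hdual.basis.sum_repr x).symm

variable {f g : ℝ → R3} {u : ℝ}

lemma hasDerivAt_mink {f' g' : R3} (hf : HasDerivAt f f' u) (hg : HasDerivAt g g' u) :
    HasDerivAt (fun t => mink (f t) (g t)) (mink (f u) g' + mink f' (g u)) u :=
  isBilinearMap_mink.toContinuousBilinearMap.hasDerivAt_of_bilinear (fun _ => hf) fun _ => hg

lemma contDiffAt_mink {n : ℕ∞ω} (hf : ContDiffAt ℝ n f u) (hg : ContDiffAt ℝ n g u) :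
    ContDiffAt ℝ n (fun t => mink (f t) (g t)) u :=
  isBilinearMap_mink.toContinuousBilinearMap.isBoundedBilinearMap.contDiff.contDiffAt.comp u
    (hf.prodMk hg)

lemma mink_deriv_add_mink_deriv_eq_zero {c : ℝ} (hf : DifferentiableAt ℝ f u)
    (hg : DifferentiableAt ℝ g u) (hc : ∀ᶠ t in 𝓝 u, mink (f t) (g t) = c) :
    mink (f u) (deriv g u) + mink (deriv f u) (g u) = 0 :=
  (hasDerivAt_mink hf.hasDerivAt hg.hasDerivAt).unique
    ((hasDerivAt_const u c).congr_of_eventuallyEq hc)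

end Mink

namespace LightlikeFrame

variable {I : Set ℝ} {γ L N : ℝ → R3} {u : ℝ}

lemma contDiffAt_L (h : LightlikeFrame I γ L N) (hu : I ∈ 𝓝 u) : ContDiffAt ℝ ∞ L u :=
  h.smooth_L.contDiffAt hu

lemma contDiffAt_N (h : LightlikeFrame I γ L N) (hu : I ∈ 𝓝 u) : ContDiffAt ℝ ∞ N u :=
  h.smooth_N.contDiffAt hu

lemma contDiffAt_deriv_gamma (h : LightlikeFrame I γ L N) (hu : I ∈ 𝓝 u) :
    ContDiffAt ℝ ∞ (deriv γ) u :=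
  (h.smooth_gamma.contDiffAt hu).derivWithin le_rfl

lemma contDiffAt_alphaL (h : LightlikeFrame I γ L N) (hu : I ∈ 𝓝 u) :
    ContDiffAt ℝ ∞ (alphaL γ L) u :=
  contDiffAt_mink ((h.contDiffAt_deriv_gamma hu).derivWithin le_rfl) (h.contDiffAt_L hu)

lemma contDiffAt_alphaG (h : LightlikeFrame I γ L N) (hu : I ∈ 𝓝 u) :
    ContDiffAt ℝ ∞ (alphaG L N) u :=
  contDiffAt_mink (h.contDiffAt_L hu) ((h.contDiffAt_N hu).derivWithin le_rfl)

lemma differentiableAt_L (h : LightlikeFrame I γ L N) (hu : I ∈ 𝓝 u) : DifferentiableAt ℝ L u :=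
  (h.contDiffAt_L hu).differentiableAt (by simp)

lemma mink_L_deriv_L (h : LightlikeFrame I γ L N) (hu : I ∈ 𝓝 u) :
    mink (L u) (deriv L u) = 0 := by
  have hLL := mink_deriv_add_mink_deriv_eq_zero (h.differentiableAt_L hu) (h.differentiableAt_L hu)
    (Filter.eventually_of_mem hu h.LL)
  rw [mink_comm (deriv L u)] at hLL
  linarith

lemma mink_deriv_gamma_deriv_L (h : LightlikeFrame I γ L N) (hu : I ∈ 𝓝 u) :
    mink (deriv γ u) (deriv L u) = -alphaL γ L u :=
  eq_neg_of_add_eq_zero_left <| mink_deriv_add_mink_deriv_eq_zero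
    ((h.contDiffAt_deriv_gamma hu).differentiableAt (by simp)) (h.differentiableAt_L hu)
    (Filter.eventually_of_mem hu h.eL)

lemma mink_N_deriv_L (h : LightlikeFrame I γ L N) (hu : I ∈ 𝓝 u) :
    mink (N u) (deriv L u) = -alphaG L N u := by
  rw [mink_comm]
  exact eq_neg_of_add_eq_zero_right <| mink_deriv_add_mink_deriv_eq_zero
    (h.differentiableAt_L hu) ((h.contDiffAt_N hu).differentiableAt (by simp))
    (Filter.eventually_of_mem hu h.LN)

lemma deriv_L (h : LightlikeFrame I γ L N) (hu : I ∈ 𝓝 u) :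
    deriv L u = -alphaL γ L u • deriv γ u - alphaG L N u • L u := by
  have huI := mem_of_mem_nhds hu
  have hexp := eq_lightlike_expansion (h.unit_speed u huI) (h.eL u huI) (h.eN u huI)
    (h.LL u huI) (h.NN u huI) (h.LN u huI) (deriv L u)
  rwa [h.mink_deriv_gamma_deriv_L hu, h.mink_N_deriv_L hu, h.mink_L_deriv_L hu, zero_smul,
    add_zero, neg_smul (alphaG L N u), ← sub_eq_add_neg] at hexp

lemma deriv_mink_L_const (h : LightlikeFrame I γ L N) (hu : I ∈ 𝓝 u) (v : R3) :
    deriv (fun t => mink (L t) v) u =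
      alphaL γ L u * -mink (deriv γ u) v + mink (L u) v * -alphaG L N u := by
  have hderiv : deriv (fun t => mink (L t) v) u = mink (deriv L u) v := by
    simpa [mink] using
      (hasDerivAt_mink (h.differentiableAt_L hu).hasDerivAt (hasDerivAt_const u v)).deriv
  rw [hderiv, h.deriv_L hu, sub_eq_add_neg, ← neg_smul, isBilinearMap_mink.add_left,
    isBilinearMap_mink.smul_left, isBilinearMap_mink.smul_left, smul_eq_mul, smul_eq_mul]
  ring

end LightlikeFrame

theorem delta_derivatives_vanish_general {I : Set ℝ} {γ L N : ℝ → R3} {u₀ : ℝ} {v : R3} {k : ℕ}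
    (hframe : LightlikeFrame I γ L N) (hu₀ : I ∈ 𝓝 u₀) (hv : mink (L u₀) v = 0)
    (hα : ∀ l ≤ k, deriv^[l] (alphaL γ L) u₀ = 0) :
    ∀ l ≤ k, deriv^[l + 1] (fun u => mink (L u) v) u₀ = 0 := by
  have hode : deriv (fun u => mink (L u) v) =ᶠ[𝓝 u₀]
      alphaL γ L * (fun u => -mink (deriv γ u) v) + (fun u => mink (L u) v) * -alphaG L N :=
    (eventually_mem_nhds_iff.mpr hu₀).mono fun u hu => hframe.deriv_mink_L_const hu v
  have hδ := contDiffAt_mink (hframe.contDiffAt_L hu₀) (contDiffAt_const (c := v))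
  have he := contDiffAt_mink (hframe.contDiffAt_deriv_gamma hu₀) (contDiffAt_const (c := v))
  simp only [← iteratedDeriv_eq_iterate] at hα ⊢
  exact fun l hl => iteratedDeriv_eq_zero_of_deriv_eq_mul_add_mul (contDiffAt_infty.mp hδ k)
    (contDiffAt_infty.mp (hframe.contDiffAt_alphaL hu₀) k) (contDiffAt_infty.mp he.neg k)
    (contDiffAt_infty.mp (hframe.contDiffAt_alphaG hu₀).neg k) hode hv hα (l + 1)
    (Nat.succ_le_succ hl)

/-- With `δ_L(u) = ⟨L(u), L(0)/L₀(0)⟩`: if `α_L⁽ˡ⁾(0) = 0` for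
`l = 0, …, k`, then `δ_L⁽ˡ⁺¹⁾(0) = 0` for `l = 0, …, k`. -/
theorem delta_derivatives_vanish (a b : ℝ) (γ L N : ℝ → R3)
    (hframe : LightlikeFrame (Set.Ioo a b) γ L N)
    (h0 : (0 : ℝ) ∈ Set.Ioo a b) (hL0 : L 0 0 ≠ 0) (k : ℕ)
    (hα : ∀ l ≤ k, deriv^[l] (alphaL γ L) 0 = 0) :
    ∀ l ≤ k, deriv^[l + 1] (fun u => mink (L u) ((L 0 0)⁻¹ • L 0)) 0 = 0 := by
  exact delta_derivatives_vanish_general hframe (isOpen_Ioo.mem_nhds h0)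
    (by rw [isBilinearMap_mink.smul_right, hframe.LL 0 h0, smul_zero]) hα
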